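/- arXiv:2105.12500 — 2 statements merged into one kernel-verified Lean document; each statement's English description precedes it below -/
import Mathlib

section
/- Let X be a real-valued random variable taking values almost surely in the interval [m, M] and satisfying P(X = m) > 0. Then for c ∈ [m, M], the equality E[X · 1_{X ≤ c}] = c · P(X ≤ c) holds if and only if c = m. -/
open MeasureTheory

/-- The unique self-consistent quiet response (Theorem 1): if `X ∈ [m, M]` a.s.
with `P(X = m) > 0`, then for `c ∈ [m, M]` one has
`E[X · 1_{X ≤ c}] = c · P(X ≤ c)` if and only if `c = m`. -/
theorem truncated_mean_eq_iff {Ω : Type*} [MeasurableSpace Ω]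
    (μ : Measure Ω) [IsProbabilityMeasure μ]
    (X : Ω → ℝ) (hXmeas : Measurable X) (hXint : Integrable X μ)
    (m M : ℝ) (hbound : ∀ᵐ ω ∂μ, X ω ∈ Set.Icc m M)
    (hatom : 0 < μ {ω | X ω = m})
    (c : ℝ) (hc : c ∈ Set.Icc m M) :
    (∫ ω in {ω | X ω ≤ c}, X ω ∂μ = c * (μ {ω | X ω ≤ c}).toReal) ↔ c = m := by
  have hS : MeasurableSet {ω | X ω ≤ c} := measurableSet_le hXmeas measurable_const
  have hconst : ∫ _ω in {ω | X ω ≤ c}, c ∂μ = c * (μ {ω | X ω ≤ c}).toReal := by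
    rw [setIntegral_const, smul_eq_mul, mul_comm]
    rfl
  constructor
  · intro h
    by_contra hne
    have hlt : m < c := lt_of_le_of_ne hc.1 (Ne.symm hne)
    have hint : IntegrableOn (fun ω => c - X ω) {ω | X ω ≤ c} μ :=
      ((integrable_const c).sub hXint).integrableOn
    have h0 : ∫ ω in {ω | X ω ≤ c}, (c - X ω) ∂μ = 0 := by
      rw [integral_sub (integrable_const c) hXint.integrableOn, hconst, h, sub_self]
    have hnn : 0 ≤ᵐ[μ.restrict {ω | X ω ≤ c}] fun ω => c - X ω := by
      filter_upwards [ae_restrict_mem hS] with ω hω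
      exact sub_nonneg.2 hω
    have hz := (integral_eq_zero_iff_of_nonneg_ae hnn hint).1 h0
    have hz2 := (ae_restrict_iff' hS).1 hz
    have hnot : ∀ᵐ ω ∂μ, ¬ X ω = m := by
      filter_upwards [hz2] with ω hω heq
      have h1 : c - X ω = 0 := hω (show X ω ≤ c by rw [heq]; exact hlt.le)
      linarith
    have hμ : μ {ω | X ω = m} = 0 := by
      simpa [ae_iff] using hnot
    exact hatom.ne' hμ
  · intro h
    rw [← hconst]
    apply setIntegral_congr_ae hS
    filter_upwards [hbound] with ω hω hle
    have h1 : X ω ≤ c := hle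
    have h2 := hω.1
    linarith
end

section
/- Let X be a real-valued random variable taking values almost surely in [m, M] with P(X = m) > 0, let R be a measurable set of real numbers (the set of realizations the sender reveals), and let c be a real number (the receiver's response to silence). Suppose: (i) sender best response — every x ∈ [m, M] with x > c lies in R, and every x ∈ [m, M] with x < c does not lie in R; and (ii) receiver consistency — if P(X ∉ R) > 0 then c · P(X ∉ R) = E[X · 1_{X ∉ R}]. If moreover P(X ∉ R) > 0, then c = m, the event {X ∉ R} is almost surely contained in {X = m}, and every x ∈ (m, M] lies in R. -/
open MeasureTheory

/-- Unraveling direction of Theorem 1 (pure strategies): in any perfect Bayesian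
equilibrium with reveal set `R` and silence response `c`, if silence has positive
probability then `c = m`, silence occurs (a.s.) only at the minimum price `m`,
and every price in `(m, M]` is revealed. -/
theorem unraveling {Ω : Type*} [MeasurableSpace Ω]
    (μ : Measure Ω) [IsProbabilityMeasure μ]
    (X : Ω → ℝ) (hXmeas : Measurable X) (hXint : Integrable X μ)
    (m M : ℝ) (hbound : ∀ᵐ ω ∂μ, X ω ∈ Set.Icc m M)
    (hatom : 0 < μ {ω | X ω = m})
    (R : Set ℝ) (hR : MeasurableSet R) (c : ℝ)
    (hreveal : ∀ x ∈ Set.Icc m M, c < x → x ∈ R)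
    (hquiet : ∀ x ∈ Set.Icc m M, x < c → x ∉ R)
    (hconsistent : 0 < μ {ω | X ω ∉ R} →
      c * (μ {ω | X ω ∉ R}).toReal = ∫ ω in {ω | X ω ∉ R}, X ω ∂μ)
    (hpos : 0 < μ {ω | X ω ∉ R}) :
    c = m ∧ (∀ᵐ ω ∂μ, X ω ∉ R → X ω = m) ∧ ∀ x ∈ Set.Ioc m M, x ∈ R := by
  have hS : MeasurableSet {ω | X ω ∉ R} := hXmeas hR.compl
  have hle : ∀ᵐ ω ∂μ, X ω ∉ R → X ω ≤ c := by
    filter_upwards [hbound] with ω hω h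
    by_contra hc
    exact h (hreveal _ hω (not_le.mp hc))
  have hint : Integrable (fun ω => c - X ω) (μ.restrict {ω | X ω ∉ R}) :=
    (integrable_const c).sub hXint.integrableOn
  have hzero : ∫ ω in {ω | X ω ∉ R}, (c - X ω) ∂μ = 0 := by
    rw [integral_sub (integrable_const c) hXint.integrableOn, ← hconsistent hpos,
      setIntegral_const, smul_eq_mul, measureReal_def]
    ring
  have hnn : 0 ≤ᵐ[μ.restrict {ω | X ω ∉ R}] (fun ω => c - X ω) := by
    refine (ae_restrict_iff' hS).2 ?_
    filter_upwards [hle] with ω hω h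
    exact sub_nonneg.2 (hω h)
  have heq : ∀ᵐ ω ∂μ, X ω ∉ R → X ω = c := by
    have h := (ae_restrict_iff' hS).1 ((integral_eq_zero_iff_of_nonneg_ae hnn hint).1 hzero)
    filter_upwards [h] with ω hω h
    have h2 : c - X ω = 0 := hω h
    linarith
  have key : ∀ {s : Set Ω} {p : Ω → Prop}, 0 < μ s → (∀ᵐ ω ∂μ, p ω) → ∃ ω ∈ s, p ω := by
    intro s p hs hp
    by_contra! hcon
    exact hs.ne' (measure_mono_null (fun ω hω => hcon ω hω) (ae_iff.1 hp))
  have hcm : c = m := by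
    apply le_antisymm
    · by_contra! hlt
      obtain ⟨ω, hω, hb, he⟩ := key hatom (hbound.and heq)
      have hω' : X ω = m := hω
      have := he (hquiet _ hb (hω' ▸ hlt))
      linarith
    · obtain ⟨ω, hω, hb, he⟩ := key hpos (hbound.and heq)
      exact he hω ▸ hb.1
  subst hcm
  exact ⟨rfl, heq, fun x hx => hreveal x ⟨hx.1.le, hx.2⟩ hx.1⟩
end
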